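/- Let T > 0, (Ω, ℱ, P) a complete probability space with filtration 𝔽 = (ℱ_t)_{t∈[0,T]}, λ Lebesgue measure on [0,T], and 𝒢 := {A ∈ ℬ([0,T])⊗ℱ : A_t ∈ ℱ_t for every t ∈ [0,T]}. Let L²_𝔽(0,T;R^l) be the Banach space of 𝒢-measurable processes y : [0,T]×Ω → R^l with E∫₀^T |y(t)|² dt < ∞, let U ⊆ R^l be a nonempty closed set, and 𝒰_ad := {u ∈ L²_𝔽(0,T;R^l) : u(t,ω) ∈ U for λ×P-a.e. (t,ω)}. Let ū ∈ 𝒰_ad and let F : [0,T]×Ω → R^l be a ℬ([0,T])⊗ℱ-measurable, 𝔽-adapted process with E∫₀^T |F(t)|² dt < ∞ such that E∫₀^T ⟨F(t), v(t)⟩ dt ≥ 0 for every v ∈ T_{𝒰_ad}(ū), the adjacent cone of 𝒰_ad at ū in L²_𝔽(0,T;R^l). Then for λ×P-almost every (t,ω) ∈ [0,T]×Ω one has ⟨F(t,ω), v⟩ ≥ 0 for every v ∈ T_U(ū(t,ω)). -/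

import Mathlib

/-!
Call `(t,ω)` bad if some `w ∈ T_U(ū(t,ω))` has `⟨F(t,ω), w⟩ < 0`. Since `T_U` is a cone, `w` can
be rescaled so that `⟨F(t,ω), w⟩ ≤ -1`, and the bad set is the union over `n` of the sets `B_n`
where such a `w` exists with `‖w‖ ≤ n`. If `v` is a `𝒢`-measurable selection of such vectors on
`B_n`, extended by `0`, then `v` lies in `T_{𝒰_ad}(ū)` (`mem_adjacentConeL2_of_bounded`), so
`0 ≤ E∫⟨F, v⟩ ≤ -(λ×P)(B_n)` and `B_n` is null.

The filtration need not contain the null sets, so the selection has to be `𝒢`-measurable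
everywhere, without completing the σ-algebra. This is possible because `T_U(x)` is the zero set of
`coneSlope U x`, the upper limit of `dist(x + h w, U) / h` as `h → 0⁺`, which is Borel in `x` and
`1`-Lipschitz in `w`. Hence the admissible `w` are the zeros of a function which is measurable in
`(t,ω)` and continuous in `w` on a closed ball. For such functions on a compact metric space
`exists_measurable_zero_selection` gives a measurable selection of zeros: the compact space is a
continuous image of the Cantor set, and one takes the least parameter of a zero.
-/


open MeasureTheory Filter Set
open scoped ENNReal RealInnerProductSpace

/-- The adjacent cone of a set `K` at a point `x`:
`T_K(x) := {v : lim_{h→0⁺} dist(x+hv, K)/h = 0}`. -/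
def adjacentCone {X : Type*} [NormedAddCommGroup X] [NormedSpace ℝ X]
    (K : Set X) (x : X) : Set X :=
  {v | Tendsto (fun h : ℝ => Metric.infDist (x + h • v) K / h)
        (nhdsWithin 0 (Set.Ioi 0)) (nhds 0)}

/-- The progressive σ-algebra
`𝒢 := {A ∈ ℬ([0,T]) ⊗ ℱ : A_t ∈ ℱ_t for every t ∈ [0,T]}` on `[0,T] × Ω`. -/
def progSigma (T : ℝ) (Ω : Type*) [mΩ : MeasurableSpace Ω]
    (F : ℝ → MeasurableSpace Ω) : MeasurableSpace (Set.Icc (0 : ℝ) T × Ω) where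
  MeasurableSet' A := MeasurableSet A ∧
    ∀ t : Set.Icc (0 : ℝ) T, MeasurableSet[F t.1] {ω : Ω | (t, ω) ∈ A}
  measurableSet_empty :=
    ⟨MeasurableSet.empty, fun t => by simp⟩
  measurableSet_compl := fun A hA =>
    ⟨hA.1.compl, fun t => by
      have : {ω : Ω | (t, ω) ∈ Aᶜ} = {ω : Ω | (t, ω) ∈ A}ᶜ := rfl
      rw [this]; exact (hA.2 t).compl⟩
  measurableSet_iUnion := fun s hs =>
    ⟨MeasurableSet.iUnion fun n => (hs n).1, fun t => by
      have : {ω : Ω | (t, ω) ∈ ⋃ n, s n} = ⋃ n, {ω : Ω | (t, ω) ∈ s n} := by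
        ext ω; simp
      rw [this]; exact MeasurableSet.iUnion fun n => (hs n).2 t⟩

/-- Lebesgue measure on `[0, T]`, viewed as a subtype of `ℝ`. -/
noncomputable def lebIcc (T : ℝ) : Measure (Set.Icc (0 : ℝ) T) :=
  Measure.comap Subtype.val volume

/-- The space `L²_𝔽(0,T;ℝ^l)` of `𝒢`-measurable processes `y` with
`E ∫₀ᵀ |y(t)|² dt < ∞`, as a set of functions on `[0,T] × Ω`. -/
def L2Adapted (T : ℝ) (Ω : Type*) [mΩ : MeasurableSpace Ω]
    (F : ℝ → MeasurableSpace Ω) (P : Measure Ω) (l : ℕ) :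
    Set (Set.Icc (0 : ℝ) T × Ω → EuclideanSpace ℝ (Fin l)) :=
  {y | Measurable[progSigma T Ω F] y ∧ eLpNorm y 2 ((lebIcc T).prod P) < ⊤}

/-- The admissible set `𝒰_ad := {u ∈ L²_𝔽 : u(t,ω) ∈ U, λ×P-a.e.}`. -/
def Uad (T : ℝ) (Ω : Type*) [mΩ : MeasurableSpace Ω]
    (F : ℝ → MeasurableSpace Ω) (P : Measure Ω) {l : ℕ}
    (U : Set (EuclideanSpace ℝ (Fin l))) :
    Set (Set.Icc (0 : ℝ) T × Ω → EuclideanSpace ℝ (Fin l)) :=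
  {u ∈ L2Adapted T Ω F P l | ∀ᵐ p ∂((lebIcc T).prod P), u p ∈ U}

/-- The adjacent cone, at `u`, of a subset `S` of the space of functions `W`
(a function model of a subspace of `L²(μ)`), with respect to the `L²(μ)`-distance:
`{v ∈ W : lim_{h→0⁺} dist_{L²}(u + h v, S)/h = 0}`. -/
def adjacentConeL2 {α E : Type*} {mα : MeasurableSpace α} (μ : Measure α)
    [NormedAddCommGroup E] [NormedSpace ℝ E]
    (W S : Set (α → E)) (u : α → E) : Set (α → E) :=
  {v ∈ W | Tendsto
    (fun h : ℝ =>
      (⨅ g ∈ S, eLpNorm (fun p => (u p + h • v p) - g p) 2 μ) / ENNReal.ofReal h)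
    (nhdsWithin 0 (Set.Ioi 0)) (nhds 0)}

open TopologicalSpace

/-! ### Measurable selection of zeros -/

/-- By compactness and continuity, a zero exists iff the values on a countable dense set have
infimum `0`. -/
lemma measurableSet_exists_zero {α K : Type*} [MeasurableSpace α] [TopologicalSpace K]
    [CompactSpace K] [SeparableSpace K] {φ : α → K → ℝ≥0∞}
    (hm : ∀ v, Measurable fun a => φ a v) (hc : ∀ a, Continuous (φ a)) :
    MeasurableSet {a | ∃ v, φ a v = 0} := by
  rcases isEmpty_or_nonempty K with hK | hK
  · simp
  have key : {a | ∃ v, φ a v = 0} =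
      ⋂ n : ℕ, ⋃ m : ℕ, {a | φ a (denseSeq K m) < ((n : ℝ≥0∞))⁻¹} := by
    ext a
    simp only [mem_ofPred_eq, mem_iInter, mem_iUnion]
    constructor
    · rintro ⟨v, hv⟩ n
      have hopen : IsOpen {w | φ a w < ((n : ℝ≥0∞))⁻¹} := isOpen_lt (hc a) continuous_const
      have hv' : v ∈ {w | φ a w < ((n : ℝ≥0∞))⁻¹} := by
        simp [hv]
      exact (denseRange_denseSeq K).exists_mem_open hopen ⟨v, hv'⟩
    · intro h
      obtain ⟨v, -, hv⟩ := isCompact_univ.exists_isMinOn univ_nonempty (hc a).continuousOn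
      refine ⟨v, ?_⟩
      by_contra hne
      obtain ⟨n, hn⟩ := ENNReal.exists_inv_nat_lt hne
      obtain ⟨m, hm⟩ := h n
      exact absurd (hm.trans hn) (not_lt.2 (hv (mem_univ _)))
  rw [key]
  exact MeasurableSet.iInter fun n => MeasurableSet.iUnion fun m =>
    measurableSet_lt (hm _) measurable_const

/-- Measurable selection of zeros of a Carathéodory function on a compact metric space.
The compact space is a continuous image of the Cantor set, and in the Cantor set the smallest
parameter of a zero depends measurably on `a`. -/
lemma exists_measurable_zero_selection {α K : Type*} [MeasurableSpace α] [MetricSpace K]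
    [CompactSpace K] [Nonempty K] [MeasurableSpace K] [BorelSpace K] {φ : α → K → ℝ≥0∞}
    (hm : ∀ v, Measurable fun a => φ a v) (hc : ∀ a, Continuous (φ a)) :
    ∃ s : α → K, Measurable s ∧ ∀ a, (∃ v, φ a v = 0) → φ a (s a) = 0 := by
  obtain ⟨f, hf, hfs⟩ := exists_nat_bool_continuous_surjective_of_compact K
  let π : cantorSet → K := fun r => f (cantorSetHomeomorphNatToBool r)
  have hπ : Continuous π := hf.comp cantorSetHomeomorphNatToBool.continuous
  have hπs : Function.Surjective π := hfs.comp cantorSetHomeomorphNatToBool.surjective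
  let Z : α → Set cantorSet := fun a => {r | φ a (π r) = 0}
  have hcompact : CompactSpace cantorSet := isCompact_iff_compactSpace.1 isCompact_cantorSet
  let S : α → Set ℝ := fun a => Subtype.val '' Z a
  have hZc : ∀ a, IsCompact (S a) := fun a =>
    ((isClosed_singleton.preimage ((hc a).comp hπ)).isCompact).image continuous_subtype_val
  have hSmem : ∀ a, (∃ v, φ a v = 0) → sInf (S a) ∈ S a := by
    rintro a ⟨v, hv⟩
    obtain ⟨r, rfl⟩ := hπs v
    exact (hZc a).sInf_mem ⟨r, r, hv, rfl⟩
  have hSempty : ∀ a, ¬ (∃ v, φ a v = 0) → sInf (S a) = 0 := by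
    intro a ha
    have : S a = ∅ := by
      simp only [S, image_eq_empty]
      exact eq_empty_of_forall_notMem fun r hr => ha ⟨_, hr⟩
    rw [this, Real.sInf_empty]
  have hmemC : ∀ a, sInf (S a) ∈ cantorSet := by
    intro a
    by_cases ha : ∃ v, φ a v = 0
    · obtain ⟨r, -, hr⟩ := hSmem a ha
      rw [← hr]; exact r.2
    · rw [hSempty a ha]; exact zero_mem_cantorSet
  have hmeas : Measurable fun a => sInf (S a) := by
    refine measurable_of_Iic fun c => ?_
    have hA : MeasurableSet {a | ∃ v, φ a v = 0} := measurableSet_exists_zero hm hc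
    have hcl : IsClosed {r : cantorSet | r.1 ≤ c} :=
      isClosed_le continuous_subtype_val continuous_const
    have : CompactSpace {r : cantorSet | r.1 ≤ c} := isCompact_iff_compactSpace.1 hcl.isCompact
    have hAc : MeasurableSet {a | ∃ r : {r : cantorSet | r.1 ≤ c}, φ a (π r.1) = 0} :=
      measurableSet_exists_zero (fun r => hm (π r.1))
        (fun a => (hc a).comp (hπ.comp continuous_subtype_val))
    have key : (fun a => sInf (S a)) ⁻¹' Iic c =
        {a | ∃ r : {r : cantorSet | r.1 ≤ c}, φ a (π r.1) = 0} ∪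
          ({a | ∃ v, φ a v = 0}ᶜ ∩ {_a | 0 ≤ c}) := by
      ext a
      simp only [mem_preimage, mem_Iic, mem_union, mem_inter_iff, mem_compl_iff, mem_ofPred_eq]
      by_cases ha : ∃ v, φ a v = 0
      · simp only [ha, not_true_eq_false, false_and, or_false]
        constructor
        · intro h
          obtain ⟨r, hr, hrs⟩ := hSmem a ha
          exact ⟨⟨r, by simpa [hrs] using h⟩, hr⟩
        · rintro ⟨⟨r, hrc⟩, hr⟩
          exact (csInf_le (hZc a).bddBelow ⟨r, hr, rfl⟩).trans hrc
      · simp only [ha, not_false_eq_true, true_and, hSempty a ha]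
        constructor
        · exact Or.inr
        · rintro (⟨r, hr⟩ | h)
          · exact absurd ⟨_, hr⟩ ha
          · exact h
    rw [key]
    exact hAc.union (hA.compl.inter (MeasurableSet.const _))
  refine ⟨fun a => π ⟨sInf (S a), hmemC a⟩, hπ.measurable.comp (hmeas.subtype_mk), ?_⟩
  intro a ha
  obtain ⟨r, hr, hrs⟩ := hSmem a ha
  have : (⟨sInf (S a), hmemC a⟩ : cantorSet) = r := Subtype.ext hrs.symm
  simp only [this]
  exact hr

/-! ### The pointwise adjacent cone -/

section AdjacentCone

variable {E : Type*} [NormedAddCommGroup E] [NormedSpace ℝ E]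

/-- The upper limit, as `h → 0⁺`, of `dist(x + h v, U) / h`, with values in `[0, ∞]`.
Its zeros in `v` form the adjacent cone of `U` at `x`. -/
noncomputable def coneSlope (U : Set E) (x v : E) : ℝ≥0∞ :=
  ⨅ n : ℕ, ⨆ h ∈ Ioo (0 : ℝ) (1 / (n + 1)),
    Metric.infEDist (x + h • v) U / ENNReal.ofReal h

/-- For fixed `h` the quotient is continuous in `x`, so the inner supremum, although uncountable,
is lower semicontinuous. -/
lemma measurable_coneSlope [MeasurableSpace E] [BorelSpace E] (U : Set E) (v : E) :
    Measurable fun x => coneSlope U x v := by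
  refine Measurable.iInf fun n => LowerSemicontinuous.measurable ?_
  refine lowerSemicontinuous_biSup fun h hh => Continuous.lowerSemicontinuous ?_
  have : ENNReal.ofReal h ≠ 0 := by simpa using hh.1
  exact ENNReal.continuous_div_const _ this |>.comp
    (Metric.continuous_infEDist.comp (continuous_id.add continuous_const))

lemma continuous_coneSlope (U : Set E) (x : E) : Continuous fun v => coneSlope U x v := by
  refine continuous_of_le_add_edist 1 (by simp) fun v w => ?_
  rw [one_mul]
  unfold coneSlope
  rw [ENNReal.iInf_add]
  refine iInf_mono fun n => iSup₂_le fun h hh => ?_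
  have h0 : ENNReal.ofReal h ≠ 0 := by simpa using hh.1
  have hd : edist (x + h • v) (x + h • w) = ENNReal.ofReal h * edist v w := by
    rw [edist_add_left, edist_smul₀, ← Real.enorm_of_nonneg hh.1.le]
    rfl
  calc Metric.infEDist (x + h • v) U / ENNReal.ofReal h
      ≤ (Metric.infEDist (x + h • w) U + ENNReal.ofReal h * edist v w) / ENNReal.ofReal h := by
        gcongr
        rw [← hd]
        exact Metric.infEDist_le_infEDist_add_edist
    _ = Metric.infEDist (x + h • w) U / ENNReal.ofReal h + edist v w := by
        rw [ENNReal.add_div, mul_comm, ENNReal.mul_div_cancel_right h0 ENNReal.ofReal_ne_top]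
    _ ≤ _ := by
        gcongr
        exact le_iSup₂ (f := fun h (_ : h ∈ Ioo (0 : ℝ) (1 / (n + 1))) =>
          Metric.infEDist (x + h • w) U / ENNReal.ofReal h) h hh

lemma mem_adjacentCone_iff_tendsto_infEDist {U : Set E} (hU : U.Nonempty) {x v : E} :
    v ∈ adjacentCone U x ↔ Tendsto (fun h : ℝ => Metric.infEDist (x + h • v) U / ENNReal.ofReal h)
      (nhdsWithin 0 (Set.Ioi 0)) (nhds 0) := by
  have heq : (fun h : ℝ => Metric.infEDist (x + h • v) U / ENNReal.ofReal h)
      =ᶠ[nhdsWithin 0 (Set.Ioi 0)]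
      fun h => ENNReal.ofReal (Metric.infDist (x + h • v) U / h) := by
    filter_upwards [self_mem_nhdsWithin] with h hh
    rw [ENNReal.ofReal_div_of_pos hh, Metric.infDist,
      ENNReal.ofReal_toReal (Metric.infEDist_ne_top hU)]
  rw [tendsto_congr' heq]
  unfold adjacentCone
  rw [mem_ofPred_eq]
  constructor
  · intro h
    simpa using ENNReal.tendsto_ofReal h
  · intro h
    have h2 := (ENNReal.tendsto_toReal ENNReal.zero_ne_top).comp h
    refine (h2.congr' ?_)
    filter_upwards [self_mem_nhdsWithin] with h hh
    exact ENNReal.toReal_ofReal (div_nonneg Metric.infDist_nonneg (le_of_lt hh))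

lemma coneSlope_eq_zero_iff {U : Set E} (hU : U.Nonempty) {x v : E} :
    coneSlope U x v = 0 ↔ v ∈ adjacentCone U x := by
  rw [mem_adjacentCone_iff_tendsto_infEDist hU, ENNReal.tendsto_nhds_zero]
  unfold coneSlope
  constructor
  · intro h ε hε
    obtain ⟨n, hn⟩ := iInf_lt_iff.1 (h.trans_lt hε)
    have hn1 : (0 : ℝ) < 1 / (n + 1) := by positivity
    filter_upwards [Ioo_mem_nhdsGT hn1] with h hh
    exact (le_iSup₂ (f := fun h (_ : h ∈ Ioo (0 : ℝ) (1 / (n + 1))) =>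
          Metric.infEDist (x + h • v) U / ENNReal.ofReal h) h hh).trans hn.le
  · intro h
    refine le_antisymm (le_of_forall_gt fun ε hε => ?_) bot_le
    obtain ⟨ε', h0, hε'⟩ := exists_between hε
    obtain ⟨δ, hδ, hsub⟩ := mem_nhdsGT_iff_exists_Ioo_subset.1 (h ε' h0)
    obtain ⟨n, hn⟩ := exists_nat_one_div_lt (show (0 : ℝ) < δ from hδ)
    refine lt_of_le_of_lt ((iInf_le _ n).trans ?_) hε'
    exact iSup₂_le fun h hh => hsub ⟨hh.1, hh.2.trans hn⟩

lemma zero_mem_adjacentCone {U : Set E} {x : E} (hx : x ∈ U) : (0 : E) ∈ adjacentCone U x := by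
  simp [adjacentCone, Metric.infDist_zero_of_mem hx]

lemma smul_mem_adjacentCone {U : Set E} {x v : E} (hv : v ∈ adjacentCone U x) {c : ℝ}
    (hc : 0 < c) : c • v ∈ adjacentCone U x := by
  unfold adjacentCone at *
  rw [mem_ofPred_eq] at *
  have h1 : Tendsto (fun h : ℝ => h * c) (nhdsWithin 0 (Set.Ioi 0)) (nhdsWithin 0 (Set.Ioi 0)) := by
    refine tendsto_nhdsWithin_iff.2 ⟨?_, ?_⟩
    · have : Tendsto (fun h : ℝ => h * c) (nhds 0) (nhds (0 * c)) := tendsto_id.mul_const c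
      rw [zero_mul] at this
      exact this.mono_left nhdsWithin_le_nhds
    · filter_upwards [self_mem_nhdsWithin] with h hh
      exact mul_pos hh hc
  have h2 := (hv.comp h1).const_mul c
  rw [mul_zero] at h2
  refine h2.congr' ?_
  filter_upwards [self_mem_nhdsWithin] with h hh
  have : h ≠ 0 := ne_of_gt hh
  simp only [Function.comp, mul_smul]
  field_simp

end AdjacentCone

/-- A Borel almost-projection onto `U`: the first point of a dense sequence of `U` that realises
the distance up to `η`. -/
lemma exists_measurable_almost_projection {E : Type*} [NormedAddCommGroup E]
    [MeasurableSpace E] [BorelSpace E] [SecondCountableTopology E] {U : Set E} (hU : U.Nonempty) {η : ℝ≥0∞} (hη : η ≠ 0) :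
    ∃ π : E → E, Measurable π ∧ (∀ y, π y ∈ U) ∧
      ∀ y, edist y (π y) ≤ Metric.infEDist y U + η := by
  classical
  have : Nonempty U := hU.to_subtype
  have hex : ∀ y, ∃ n, edist y (denseSeq U n : E) < Metric.infEDist y U + η := by
    intro y
    have hlt : Metric.infEDist y U < Metric.infEDist y U + η :=
      ENNReal.lt_add_right (Metric.infEDist_ne_top hU) hη
    obtain ⟨z, hz, hyz⟩ := Metric.infEDist_lt_iff.1 hlt
    have hopen : IsOpen {w : U | edist y (w : E) < Metric.infEDist y U + η} :=
      isOpen_lt (continuous_const.edist continuous_subtype_val) continuous_const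
    exact (denseRange_denseSeq U).exists_mem_open hopen ⟨⟨z, hz⟩, hyz⟩
  refine ⟨fun y => (denseSeq U (Nat.find (hex y)) : E), ?_, fun y => Subtype.coe_prop _,
    fun y => (Nat.find_spec (hex y)).le⟩
  refine Measurable.find (f := fun n _ => (denseSeq U n : E)) (fun n => measurable_const)
    (fun n => ?_) hex
  exact measurableSet_lt (measurable_id.edist measurable_const)
    (measurable_infEDist.add measurable_const)

/-! ### The adjacent cone of the admissible set -/

lemma progSigma_le (T : ℝ) {Ω : Type*} [mΩ : MeasurableSpace Ω] (F : ℝ → MeasurableSpace Ω) :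
    progSigma T Ω F ≤ (inferInstance : MeasurableSpace (Set.Icc (0 : ℝ) T × Ω)) :=
  fun _ hA => hA.1

instance isFiniteMeasure_lebIcc (T : ℝ) : IsFiniteMeasure (lebIcc T) := by
  refine ⟨?_⟩
  rw [lebIcc, (MeasurableEmbedding.subtype_coe measurableSet_Icc).comap_apply, image_univ,
    Subtype.range_coe]
  exact measure_Icc_lt_top

/-- Bounded progressive selections of the pointwise adjacent cones `T_U(ū(t,ω))` belong to the
adjacent cone of `𝒰_ad` at `ū`: almost-projecting `ū + h v` onto `U` gives competitors in `𝒰_ad`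
at pointwise distance at most `dist(ū + h v, U) + h²`, and dominated convergence applies to the
quotient by `h`. -/
lemma mem_adjacentConeL2_of_bounded
    {T : ℝ} {Ω : Type*} [mΩ : MeasurableSpace Ω]
    {P : Measure Ω} [IsProbabilityMeasure P] {F : ℝ → MeasurableSpace Ω}
    {l : ℕ} {U : Set (EuclideanSpace ℝ (Fin l))} (hUne : U.Nonempty)
    {ubar v : Set.Icc (0 : ℝ) T × Ω → EuclideanSpace ℝ (Fin l)}
    (hubar : ubar ∈ Uad T Ω F P U)
    (hv : Measurable[progSigma T Ω F] v) {n : ℕ} (hvn : ∀ p, ‖v p‖ₑ ≤ n)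
    (hcone : ∀ᵐ p ∂((lebIcc T).prod P), v p ∈ adjacentCone U (ubar p)) :
    v ∈ adjacentConeL2 ((lebIcc T).prod P) (L2Adapted T Ω F P l) (Uad T Ω F P U) ubar := by
  obtain ⟨⟨hum, huL⟩, huU⟩ := hubar
  have hle := progSigma_le T F
  have hv' : Measurable v := hv.mono hle le_rfl
  have hu' : Measurable ubar := hum.mono hle le_rfl
  have hbdd : ∀ {f : Set.Icc (0 : ℝ) T × Ω → EuclideanSpace ℝ (Fin l)} {C : ℝ≥0∞}, C ≠ ∞ →
      (∀ᵐ p ∂((lebIcc T).prod P), ‖f p‖ₑ ≤ C) → eLpNorm f 2 ((lebIcc T).prod P) < ∞ := by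
    intro f C hC hf
    lift C to NNReal using hC
    refine (eLpNorm_le_of_ae_nnnorm_bound (C := C) ?_).trans_lt ?_
    · filter_upwards [hf] with p hp
      exact_mod_cast hp
    · simp only [ENNReal.smul_def, smul_eq_mul]
      refine ENNReal.mul_lt_top ENNReal.coe_lt_top
        (ENNReal.rpow_lt_top_of_nonneg (by simp) (measure_ne_top _ _))
  have hvL : eLpNorm v 2 ((lebIcc T).prod P) < ∞ :=
    hbdd (ENNReal.natCast_ne_top n) (ae_of_all _ hvn)
  refine ⟨⟨hv, hvL⟩, ?_⟩
  -- the quotient by `h` of the pointwise distance from `ū + h v` to its almost-projection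
  let k : ℝ → Set.Icc (0 : ℝ) T × Ω → ℝ≥0∞ := fun h p =>
    Metric.infEDist (ubar p + h • v p) U / ENNReal.ofReal h + ENNReal.ofReal h
  have hkm : ∀ h, Measurable (k h) := fun h =>
    ((measurable_infEDist.comp (hu'.add (hv'.const_smul h))).div_const _).add_const _
  have hdist : ∀ h > 0, ∀ p, ubar p ∈ U →
      Metric.infEDist (ubar p + h • v p) U ≤ ENNReal.ofReal h * n := by
    intro h hh p hp
    refine (Metric.infEDist_le_edist_of_mem hp).trans ?_
    rw [edist_eq_enorm_sub, add_sub_cancel_left, enorm_smul, Real.enorm_of_nonneg hh.le]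
    gcongr
    exact hvn p
  have hkb : ∀ h ∈ Ioo (0 : ℝ) 1, ∀ p, ubar p ∈ U → k h p ≤ n + 1 := by
    intro h hh p hp
    refine add_le_add ?_ ?_
    · exact ENNReal.div_le_of_le_mul' (hdist h hh.1 p hp)
    · simpa using hh.2.le
  have hlim : Tendsto (fun h => ∫⁻ p, (k h p) ^ (2 : ℝ) ∂((lebIcc T).prod P))
      (nhdsWithin 0 (Ioi 0)) (nhds 0) := by
    have := tendsto_lintegral_filter_of_dominated_convergence
      (μ := (lebIcc T).prod P) (l := nhdsWithin (0 : ℝ) (Ioi 0))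
      (F := fun h p => (k h p) ^ (2 : ℝ)) (f := fun _ => 0) (fun _ => ((n : ℝ≥0∞) + 1) ^ (2 : ℝ))
      (Eventually.of_forall fun h => (hkm h).pow_const _) ?_ ?_ ?_
    · simpa using this
    · filter_upwards [Ioo_mem_nhdsGT (zero_lt_one' ℝ)] with h hh
      filter_upwards [huU] with p hp
      exact ENNReal.rpow_le_rpow (hkb h hh p hp) (by norm_num)
    · rw [lintegral_const]
      exact ENNReal.mul_ne_top (ENNReal.rpow_ne_top_of_nonneg (by norm_num) (by simp))
        (measure_ne_top _ _)
    · filter_upwards [hcone] with p hp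
      have h1 := (mem_adjacentCone_iff_tendsto_infEDist hUne).1 hp
      have h2 : Tendsto (fun h : ℝ => ENNReal.ofReal h) (nhdsWithin 0 (Ioi 0)) (nhds 0) := by
        simpa using (ENNReal.tendsto_ofReal (tendsto_id (x := nhds (0 : ℝ)))).mono_left
          (nhdsWithin_le_nhds (s := Ioi 0))
      have h3 := (h1.add h2).ennrpow_const 2
      simpa using h3
  have hlim2 : Tendsto
      (fun h => (∫⁻ p, (k h p) ^ (2 : ℝ) ∂((lebIcc T).prod P)) ^ (1 / 2 : ℝ))
      (nhdsWithin 0 (Ioi 0)) (nhds 0) := by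
    simpa using hlim.ennrpow_const (1 / 2)
  refine tendsto_of_tendsto_of_tendsto_of_le_of_le' tendsto_const_nhds hlim2
    (Eventually.of_forall fun _ => bot_le) ?_
  filter_upwards [self_mem_nhdsWithin] with h hh
  have hh : 0 < h := hh
  have hc0 : ENNReal.ofReal h ≠ 0 := by simpa using hh
  obtain ⟨π, hπm, hπU, hπd⟩ := exists_measurable_almost_projection hUne
    (η := ENNReal.ofReal h * ENNReal.ofReal h) (mul_ne_zero hc0 hc0)
  have hym : Measurable[progSigma T Ω F] fun p => ubar p + h • v p :=
    hum.add (hv.const_smul h)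
  have hgm : Measurable[progSigma T Ω F] fun p => π (ubar p + h • v p) := hπm.comp hym
  have hpt : ∀ p, ‖(ubar p + h • v p) - π (ubar p + h • v p)‖ₑ ≤ ENNReal.ofReal h * k h p := by
    intro p
    rw [← edist_eq_enorm_sub]
    refine (hπd _).trans_eq ?_
    simp only [k]
    rw [mul_add, ENNReal.mul_div_cancel hc0 ENNReal.ofReal_ne_top]
  have hdiffL : eLpNorm (fun p => (ubar p + h • v p) - π (ubar p + h • v p)) 2
      ((lebIcc T).prod P) < ∞ := by
    refine hbdd (C := ENNReal.ofReal h * n + ENNReal.ofReal h * ENNReal.ofReal h) ?_ ?_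
    · finiteness
    · filter_upwards [huU] with p hp
      rw [← edist_eq_enorm_sub]
      refine (hπd _).trans ?_
      gcongr
      exact hdist h hh p hp
  have huM : MemLp ubar 2 ((lebIcc T).prod P) := ⟨hu'.aestronglyMeasurable, huL⟩
  have hvM : MemLp v 2 ((lebIcc T).prod P) := ⟨hv'.aestronglyMeasurable, hvL⟩
  have hyM : MemLp (fun p => ubar p + h • v p) 2 ((lebIcc T).prod P) :=
    huM.add (hvM.const_smul h)
  have hdM : MemLp (fun p => (ubar p + h • v p) - π (ubar p + h • v p)) 2
      ((lebIcc T).prod P) :=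
    ⟨((hym.mono hle le_rfl).sub (hgm.mono hle le_rfl)).aestronglyMeasurable, hdiffL⟩
  have hgM : MemLp (fun p => π (ubar p + h • v p)) 2 ((lebIcc T).prod P) := by
    simpa [Pi.sub_def] using hyM.sub hdM
  have hg : (fun p => π (ubar p + h • v p)) ∈ Uad T Ω F P U :=
    ⟨⟨hgm, hgM.2⟩, ae_of_all _ fun p => hπU _⟩
  refine ENNReal.div_le_of_le_mul' ((iInf₂_le _ hg).trans ?_)
  rw [eLpNorm_eq_lintegral_rpow_enorm_toReal (by norm_num) (by norm_num)]
  simp only [ENNReal.toReal_ofNat]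
  calc (∫⁻ p, ‖(ubar p + h • v p) - π (ubar p + h • v p)‖ₑ ^ (2 : ℝ)
          ∂((lebIcc T).prod P)) ^ (1 / 2 : ℝ)
      ≤ (∫⁻ p, (ENNReal.ofReal h * k h p) ^ (2 : ℝ) ∂((lebIcc T).prod P)) ^ (1 / 2 : ℝ) := by
        gcongr with p
        exact hpt p
    _ = ((ENNReal.ofReal h) ^ (2 : ℝ) *
          ∫⁻ p, (k h p) ^ (2 : ℝ) ∂((lebIcc T).prod P)) ^ (1 / 2 : ℝ) := by
        rw [← lintegral_const_mul _ ((hkm h).pow_const _)]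
        simp only [ENNReal.mul_rpow_of_nonneg _ _ (show (0 : ℝ) ≤ 2 by norm_num)]
    _ = _ := by
        rw [ENNReal.mul_rpow_of_nonneg _ _ (by norm_num), ← ENNReal.rpow_mul]
        norm_num

/-! ### The pointwise condition -/

/-- Pointwise necessary condition from the integral one: if `ū ∈ 𝒰_ad` and `F` is a
measurable adapted square-integrable process with `E ∫₀ᵀ ⟨F(t), v(t)⟩ dt ≥ 0` for every
`v` in the adjacent cone `T_{𝒰_ad}(ū)` (in `L²_𝔽(0,T;ℝ^l)`), then for `λ×P`-a.e.
`(t,ω)` one has `⟨F(t,ω), v⟩ ≥ 0` for every `v ∈ T_U(ū(t,ω))`. -/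
theorem pointwise_of_integral_necessary_condition
    (T : ℝ) (hT : 0 < T) {Ω : Type*} [mΩ : MeasurableSpace Ω]
    (P : Measure Ω) [IsProbabilityMeasure P] (hPc : P.IsComplete)
    (F : ℝ → MeasurableSpace Ω)
    (hFle : ∀ t : ℝ, F t ≤ mΩ)
    (hFmono : ∀ s t : ℝ, s ≤ t → F s ≤ F t)
    {l : ℕ} (U : Set (EuclideanSpace ℝ (Fin l))) (hUcl : IsClosed U)
    (hUne : U.Nonempty)
    (ubar : Set.Icc (0 : ℝ) T × Ω → EuclideanSpace ℝ (Fin l))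
    (hubar : ubar ∈ Uad T Ω F P U)
    (Ff : Set.Icc (0 : ℝ) T × Ω → EuclideanSpace ℝ (Fin l))
    (hFfmeas : Measurable Ff)
    (hFfadapted : ∀ t : Set.Icc (0 : ℝ) T,
      Measurable[F t.1] fun ω : Ω => Ff (t, ω))
    (hFfint : eLpNorm Ff 2 ((lebIcc T).prod P) < ⊤)
    (hpos : ∀ v ∈ adjacentConeL2 ((lebIcc T).prod P)
        (L2Adapted T Ω F P l) (Uad T Ω F P U) ubar,
      0 ≤ ∫ p, ⟪Ff p, v p⟫ ∂((lebIcc T).prod P)) :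
    ∀ᵐ p ∂((lebIcc T).prod P), ∀ v ∈ adjacentCone U (ubar p), 0 ≤ ⟪Ff p, v⟫ := by
  have hle := progSigma_le T F
  obtain ⟨⟨hum, huL⟩, huU⟩ := id hubar
  have hFprog : Measurable[progSigma T Ω F] Ff :=
    fun s hs => ⟨hFfmeas hs, fun t => hFfadapted t hs⟩
  -- `w` violates the claim at `p`, normalised so that `⟪Ff p, w⟫ ≤ -1`, iff `φ p w = 0`
  let φ : Set.Icc (0 : ℝ) T × Ω → EuclideanSpace ℝ (Fin l) → ℝ≥0∞ := fun p w =>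
    coneSlope U (ubar p) w + ENNReal.ofReal (⟪Ff p, w⟫ + 1)
  have hφ0 : ∀ p w, φ p w = 0 ↔ w ∈ adjacentCone U (ubar p) ∧ ⟪Ff p, w⟫ ≤ -1 := by
    intro p w
    simp only [φ, add_eq_zero, coneSlope_eq_zero_iff hUne, ENNReal.ofReal_eq_zero]
    refine and_congr_right fun _ => ⟨fun h => by linarith, fun h => by linarith⟩
  have hφm : ∀ w, Measurable[progSigma T Ω F] fun p => φ p w := by
    intro w
    refine Measurable.add ((measurable_coneSlope U w).comp hum) ?_
    exact ENNReal.measurable_ofReal.comp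
      (((continuous_id.inner continuous_const).measurable.comp hFprog).add_const 1)
  have hφc : ∀ p, Continuous (φ p) := by
    intro p
    refine (continuous_coneSlope U (ubar p)).add (ENNReal.continuous_ofReal.comp ?_)
    fun_prop
  have hnull : ∀ n : ℕ, ∀ᵐ p ∂((lebIcc T).prod P),
      ¬ ∃ w : Metric.closedBall (0 : EuclideanSpace ℝ (Fin l)) (n : ℝ), φ p w = 0 := by
    intro n
    let K := Metric.closedBall (0 : EuclideanSpace ℝ (Fin l)) (n : ℝ)
    have hKc : CompactSpace K := isCompact_iff_compactSpace.1 (isCompact_closedBall _ _)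
    have hKn : Nonempty K := ⟨⟨0, by simp [K]⟩⟩
    let B : Set (Set.Icc (0 : ℝ) T × Ω) := {p | ∃ w : K, φ p w = 0}
    have hB : MeasurableSet[progSigma T Ω F] B :=
      @measurableSet_exists_zero _ K (progSigma T Ω F) _ _ _ (fun p w => φ p w)
        (fun w => hφm w) (fun p => (hφc p).comp continuous_subtype_val)
    obtain ⟨s, hs, hsz⟩ :=
      @exists_measurable_zero_selection _ K (progSigma T Ω F) _ _ _ _ _ (fun p w => φ p w)
        (fun w => hφm w) (fun p => (hφc p).comp continuous_subtype_val)
    let v : Set.Icc (0 : ℝ) T × Ω → EuclideanSpace ℝ (Fin l) :=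
      B.indicator fun p => (s p : EuclideanSpace ℝ (Fin l))
    have hv : Measurable[progSigma T Ω F] v :=
      (measurable_subtype_coe.comp hs).indicator hB
    have hvn' : ∀ p, ‖v p‖ ≤ n := by
      intro p
      by_cases hp : p ∈ B
      · simpa [v, hp] using mem_closedBall_zero_iff.1 (s p).2
      · simp [v, hp]
    have hvn : ∀ p, ‖v p‖ₑ ≤ n := by
      intro p
      rw [← ofReal_norm, ← ENNReal.ofReal_natCast]
      exact ENNReal.ofReal_le_ofReal (hvn' p)
    have hcone : ∀ᵐ p ∂((lebIcc T).prod P), v p ∈ adjacentCone U (ubar p) := by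
      filter_upwards [huU] with p hpU
      by_cases hp : p ∈ B
      · simpa [v, hp] using ((hφ0 _ _).1 (hsz p hp)).1
      · simpa [v, hp] using zero_mem_adjacentCone hpU
    have hint := hpos v (mem_adjacentConeL2_of_bounded hUne hubar hv hvn hcone)
    have hB' : MeasurableSet B := hle _ hB
    have hptw : ∀ p, ⟪Ff p, v p⟫ ≤ B.indicator (fun _ => (-1 : ℝ)) p := by
      intro p
      by_cases hp : p ∈ B
      · simpa [v, hp] using ((hφ0 _ _).1 (hsz p hp)).2
      · simp [v, hp]
    have hFI : Integrable Ff ((lebIcc T).prod P) :=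
      MemLp.integrable (q := 2) (by norm_num) ⟨hFfmeas.aestronglyMeasurable, hFfint⟩
    have hI : Integrable (fun p => ⟪Ff p, v p⟫) ((lebIcc T).prod P) := by
      refine (hFI.norm.mul_const (n : ℝ)).mono'
        (hFfmeas.inner (hv.mono hle le_rfl)).aestronglyMeasurable (ae_of_all _ fun p => ?_)
      exact (norm_inner_le_norm _ _).trans (by gcongr; exact hvn' p)
    have hmono := integral_mono hI
      ((integrable_const (-1 : ℝ)).indicator hB') hptw
    rw [integral_indicator_const _ hB'] at hmono
    have hz : ((lebIcc T).prod P).real B = 0 := by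
      have := measureReal_nonneg (μ := (lebIcc T).prod P) (s := B)
      simp only [smul_eq_mul] at hmono
      linarith
    have hz' : ((lebIcc T).prod P) B = 0 := (measureReal_eq_zero_iff).1 hz
    exact measure_eq_zero_iff_ae_notMem.1 hz'
  filter_upwards [ae_all_iff.2 hnull] with p hp w hw
  by_contra hneg
  have hneg : ⟪Ff p, w⟫ < 0 := not_le.1 hneg
  have hc : 0 < (-⟪Ff p, w⟫)⁻¹ := inv_pos.2 (neg_pos.2 hneg)
  obtain ⟨n, hn⟩ := exists_nat_ge ‖(-⟪Ff p, w⟫)⁻¹ • w‖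
  refine hp n ⟨⟨(-⟪Ff p, w⟫)⁻¹ • w, by simpa using hn⟩, (hφ0 _ _).2
    ⟨smul_mem_adjacentCone hw hc, ?_⟩⟩
  rw [inner_smul_right]
  have : ⟪Ff p, w⟫ ≠ 0 := hneg.ne
  field_simp
  simp
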